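/- Loop Bellman equation: Let (X_t, R_t)_{t≥0} be a finite Markov reward process, γ ∈ [0,1) a discount factor, and s a positive recurrent state (ρ_s < ∞) with X_0 = s. Then the discounted value satisfies v(s) = β(s) + α(s)·v(s), where α(s) = E_s[γ^{I_1(s)}] is the expected loop discount and β(s) = E_s[G_1(s)] is the expected loop discounted reward; equivalently, since α(s) ≤ γ < 1, v(s) = β(s)/(1 − α(s)). -/

import Mathlib

open MeasureTheory ProbabilityTheory Filter
open scoped ENNReal ENat

noncomputable section

/-- The first return time to `s` of the process `X` (`⊤` if `s` is never revisited). -/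
def retTime {S Ω : Type*} (X : ℕ → Ω → S) (s : S) (ω : Ω) : ℕ∞ :=
  ⨅ (m : ℕ) (_ : 0 < m ∧ X m ω = s), (m : ℕ∞)

/-- `waitTime X s n ω`: the step of the `n`-th visit of the process `X` to `s`,
i.e. `inf {w : n ≤ ∑_{t=0}^w 1[X_t = s]}` (`⊤` if there is no `n`-th visit). -/
def waitTime {S Ω : Type*} [DecidableEq S] (X : ℕ → Ω → S) (s : S) (n : ℕ) (ω : Ω) : ℕ∞ :=
  ⨅ (w : ℕ) (_ : n ≤ ∑ t ∈ Finset.range (w + 1), if X t ω = s then 1 else 0), (w : ℕ∞)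

/-- The `n`-th interarrival time `I_n(s) = W_{n+1}(s) - W_n(s)`. -/
def interTime {S Ω : Type*} [DecidableEq S] (X : ℕ → Ω → S) (s : S) (n : ℕ) (ω : Ω) : ℕ∞ :=
  waitTime X s (n + 1) ω - waitTime X s n ω

/-- `γ` raised to a possibly-infinite power (`γ^⊤ = 0`, as appropriate for `γ < 1`). -/
def discPow (γ : ℝ) (n : ℕ∞) : ℝ :=
  if n = ⊤ then 0 else γ ^ n.toNat

/-- The `n`-th loop `γ`-discounted rewards `G_n(s) = ∑_{u=0}^{I_n(s)-1} γ^u R_{W_n(s)+u}`. -/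
def loopReward {S Ω : Type*} [DecidableEq S] (γ : ℝ) (X : ℕ → Ω → S) (R : ℕ → Ω → ℝ)
    (s : S) (n : ℕ) (ω : Ω) : ℝ :=
  ∑' u : ℕ, if (u : ℕ∞) < interTime X s n ω
    then γ ^ u * R ((waitTime X s n ω).toNat + u) ω else 0

/-!
Let `τ` be the first return time to `s`. Splitting on `τ` and using the Markov property on each
event `τ = k` gives the renewal equation
`E R_t = E[R_t; t < τ] + ∑_{k ≤ t} P(τ = k) E R_{t-k}`.
Multiplying by `γ ^ t` and summing over `t` turns the convolution into the product of
`∑_k γ ^ k P(τ = k) = E γ ^ τ` and the discounted value, while the first term sums to the expected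
loop reward. Since `X_0 = s`, the first visit is at time `0`, so the first interarrival time is `τ`.
-/

section RegenerationTime

open Finset.HasAntidiagonal (antidiagonal mem_antidiagonal antidiagonal_congr)

variable {Ω : Type*} [MeasurableSpace Ω] {μ : Measure Ω} {γ : ℝ} {R : ℕ → Ω → ℝ} {N : Ω → ℕ∞}

theorem discPow_eq_tsum (γ : ℝ) (n : ℕ∞) :
    discPow γ n = ∑' k : ℕ, if n = k then γ ^ k else 0 := by
  induction n using ENat.recTopCoe with
  | top => simp [discPow]
  | coe n =>
    rw [tsum_eq_single n fun k hk ↦ if_neg fun h ↦ hk (Nat.cast_injective h).symm]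
    simp [discPow]

theorem abs_discPow_le (hγ : |γ| ≤ 1) {n : ℕ∞} (hn : 1 ≤ n) : |discPow γ n| ≤ |γ| := by
  induction n using ENat.recTopCoe with
  | top => simp [discPow]
  | coe n =>
    have hn0 : n ≠ 0 := Nat.one_le_iff_ne_zero.1 (by exact_mod_cast hn)
    simpa [discPow, abs_pow] using pow_le_of_le_one (abs_nonneg γ) hγ hn0

theorem abs_integral_discPow_le [IsProbabilityMeasure μ] (hγ : |γ| ≤ 1)
    (hN : ∀ ω, 1 ≤ N ω) : |∫ ω, discPow γ (N ω) ∂μ| ≤ |γ| := by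
  have hbound : ∀ᵐ ω ∂μ, ‖discPow γ (N ω)‖ ≤ |γ| := ae_of_all μ fun ω ↦ abs_discPow_le hγ (hN ω)
  simpa using norm_integral_le_of_norm_le_const hbound

theorem summable_norm_pow_mul_measureReal [IsFiniteMeasure μ] (hγ : |γ| < 1)
    (s : ℕ → Set Ω) : Summable fun k ↦ ‖γ ^ k * μ.real (s k)‖ := by
  refine ((summable_geometric_of_lt_one (abs_nonneg γ) hγ).mul_right
    (μ.real Set.univ)).of_nonneg_of_le (fun _ ↦ norm_nonneg _) fun k ↦ ?_
  rw [norm_mul, norm_pow, Real.norm_eq_abs γ, Real.norm_of_nonneg measureReal_nonneg]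
  exact mul_le_mul_of_nonneg_left (measureReal_mono (Set.subset_univ _)) (by positivity)

theorem integral_discPow [IsFiniteMeasure μ] (hγ : |γ| < 1) (hN : Measurable N) :
    ∫ ω, discPow γ (N ω) ∂μ = ∑' k : ℕ, γ ^ k * μ.real {ω | N ω = k} := by
  have hmeas (k : ℕ) : MeasurableSet {ω | N ω = k} := hN (measurableSet_singleton _)
  have hint (k : ℕ) : Integrable ({ω | N ω = k}.indicator fun _ ↦ γ ^ k) μ :=
    (integrable_const _).indicator (hmeas k)
  have hval (c : ℝ) (k : ℕ) : ∫ ω, {ω | N ω = k}.indicator (fun _ ↦ c) ω ∂μ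
      = c * μ.real {ω | N ω = k} := by
    rw [integral_indicator_const _ (hmeas k), smul_eq_mul, mul_comm]
  have hsum : Summable fun k : ℕ ↦ ∫ ω, ‖{ω | N ω = k}.indicator (fun _ ↦ γ ^ k) ω‖ ∂μ := by
    simpa only [norm_indicator_eq_indicator_norm, hval, norm_mul,
      Real.norm_of_nonneg measureReal_nonneg] using
      summable_norm_pow_mul_measureReal (μ := μ) hγ fun k ↦ {ω | N ω = k}
  calc ∫ ω, discPow γ (N ω) ∂μ
      = ∫ ω, ∑' k : ℕ, {ω | N ω = k}.indicator (fun _ ↦ γ ^ k) ω ∂μ := by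
        simp only [discPow_eq_tsum, Set.indicator_apply, Set.mem_ofPred_eq]
    _ = ∑' k : ℕ, γ ^ k * μ.real {ω | N ω = k} := by
        rw [← integral_tsum_of_summable_integral_norm hint hsum]
        simp only [hval]

theorem integral_tsum_pow_mul (hR : ∀ t, Integrable (R t) μ)
    (hsum : Summable fun t ↦ |γ| ^ t * ∫ ω, |R t ω| ∂μ) :
    ∫ ω, ∑' t, γ ^ t * R t ω ∂μ = ∑' t, γ ^ t * ∫ ω, R t ω ∂μ := by
  rw [← integral_tsum_of_summable_integral_norm fun t ↦ (hR t).const_mul (γ ^ t)]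
  · simp only [integral_const_mul]
  · simpa only [norm_mul, norm_pow, Real.norm_eq_abs, integral_const_mul] using hsum

theorem summable_pow_mul_integral_abs_indicator {A : ℕ → Set Ω} (hA : ∀ t, MeasurableSet (A t))
    (hR : ∀ t, Integrable (R t) μ) (hsum : Summable fun t ↦ |γ| ^ t * ∫ ω, |R t ω| ∂μ) :
    Summable fun t ↦ |γ| ^ t * ∫ ω, |(A t).indicator (R t) ω| ∂μ := by
  refine hsum.of_nonneg_of_le (fun t ↦ by positivity) fun t ↦ ?_
  exact mul_le_mul_of_nonneg_left (integral_mono ((hR t).indicator (hA t)).abs (hR t).abs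
    fun ω ↦ norm_indicator_le_norm_self (R t) ω) (by positivity)

theorem summable_norm_pow_mul_integral (hsum : Summable fun t ↦ |γ| ^ t * ∫ ω, |R t ω| ∂μ) :
    Summable fun t ↦ ‖γ ^ t * ∫ ω, R t ω ∂μ‖ := by
  refine hsum.of_nonneg_of_le (fun _ ↦ norm_nonneg _) fun t ↦ ?_
  rw [norm_mul, norm_pow, Real.norm_eq_abs γ]
  gcongr
  exact norm_integral_le_integral_norm (R t)

theorem summable_pow_mul_integral_abs_of_bound [IsProbabilityMeasure μ] {r : ℝ} (hγ : |γ| < 1)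
    (hR : ∀ t, ∀ᵐ ω ∂μ, |R t ω| ≤ r) : Summable fun t ↦ |γ| ^ t * ∫ ω, |R t ω| ∂μ := by
  refine ((summable_geometric_of_lt_one (abs_nonneg γ) hγ).mul_right r).of_nonneg_of_le
    (fun t ↦ by positivity) fun t ↦ ?_
  gcongr
  simpa using integral_mono_of_nonneg (ae_of_all μ fun ω ↦ abs_nonneg (R t ω))
    (integrable_const r) (hR t)

/-- The random time `N` regenerates the reward process `R` in mean: on the event `N = k`, the
expected reward `u` steps later is the expected reward at time `u`. The event `N = ⊤` is left
unconstrained. This is the part of the strong Markov property behind the renewal equation. -/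
def RegeneratesInMean (μ : Measure Ω) (R : ℕ → Ω → ℝ) (N : Ω → ℕ∞) : Prop :=
  ∀ k u : ℕ, ∫ ω in {ω | N ω = k}, R (k + u) ω ∂μ = μ.real {ω | N ω = k} * ∫ ω, R u ω ∂μ

namespace RegeneratesInMean

theorem setIntegral_le_eq_sum_antidiagonal (h : RegeneratesInMean μ R N) (hN : Measurable N)
    {t : ℕ} (hR : Integrable (R t) μ) :
    ∫ ω in {ω | N ω ≤ t}, R t ω ∂μ
      = ∑ p ∈ antidiagonal t, μ.real {ω | N ω = p.1} * ∫ ω, R p.2 ω ∂μ := by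
  have hunion : {ω | N ω ≤ t} = ⋃ p ∈ antidiagonal t, {ω | N ω = (p.1 : ℕ)} := by
    ext ω
    simp only [Set.mem_ofPred_eq, Set.mem_iUnion, mem_antidiagonal, exists_prop,
      Prod.exists]
    constructor
    · intro hle
      obtain ⟨k, hk, hkt⟩ := ENat.le_natCast_iff.1 hle
      exact ⟨k, t - k, by omega, hk⟩
    · rintro ⟨k, u, hku, hk⟩
      rw [hk]
      exact_mod_cast (by omega : k ≤ t)
  have hdisj : Set.PairwiseDisjoint (antidiagonal t : Set (ℕ × ℕ))
      fun p ↦ {ω | N ω = (p.1 : ℕ)} := by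
    intro p hp q hq hpq
    refine Set.disjoint_left.2 fun ω hωp hωq ↦ hpq ?_
    exact (antidiagonal_congr hp hq).2 (Nat.cast_injective (hωp.symm.trans hωq))
  have hmeas (p : ℕ × ℕ) : MeasurableSet {ω | N ω = (p.1 : ℕ)} := hN (measurableSet_singleton _)
  rw [hunion, integral_biUnion_finset _ (fun p _ ↦ hmeas p) hdisj fun _ _ ↦ hR.integrableOn]
  refine Finset.sum_congr rfl fun p hp ↦ ?_
  rw [← h p.1 p.2, mem_antidiagonal.1 hp]

theorem integral_tsum_eq_add [IsFiniteMeasure μ] (h : RegeneratesInMean μ R N)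
    (hN : Measurable N) (hγ : |γ| < 1) (hR : ∀ t, Integrable (R t) μ)
    (hsum : Summable fun t ↦ |γ| ^ t * ∫ ω, |R t ω| ∂μ) :
    ∫ ω, ∑' t, γ ^ t * R t ω ∂μ
      = ∫ ω, ∑' t : ℕ, γ ^ t * {ω | t < N ω}.indicator (R t) ω ∂μ
        + (∫ ω, discPow γ (N ω) ∂μ) * ∫ ω, ∑' t, γ ^ t * R t ω ∂μ := by
  have hmeas (t : ℕ) : MeasurableSet {ω | t < N ω} := hN (.of_discrete (s := Set.Ioi (t : ℕ∞)))
  have hloop_int (t : ℕ) : Integrable ({ω | t < N ω}.indicator (R t)) μ :=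
    (hR t).indicator (hmeas t)
  have hloop_sum := summable_pow_mul_integral_abs_indicator hmeas hR hsum
  have hα := summable_norm_pow_mul_measureReal (μ := μ) hγ fun k ↦ {ω | N ω = k}
  have hv := summable_norm_pow_mul_integral hsum
  have hrenewal (t : ℕ) : γ ^ t * ∫ ω, R t ω ∂μ
      = γ ^ t * ∫ ω, {ω | t < N ω}.indicator (R t) ω ∂μ
        + ∑ p ∈ antidiagonal t,
          γ ^ p.1 * μ.real {ω | N ω = p.1} * (γ ^ p.2 * ∫ ω, R p.2 ω ∂μ) := by
    have hcompl : {ω | t < N ω}ᶜ = {ω | N ω ≤ t} := by ext; simp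
    rw [integral_indicator (hmeas t), ← integral_add_compl (hmeas t) (hR t), hcompl,
      h.setIntegral_le_eq_sum_antidiagonal hN (hR t), mul_add, Finset.mul_sum]
    congr 1
    refine Finset.sum_congr rfl fun p hp ↦ ?_
    rw [← mem_antidiagonal.1 hp]
    ring
  rw [integral_tsum_pow_mul hR hsum, integral_tsum_pow_mul hloop_int hloop_sum,
    integral_discPow hγ hN, tsum_mul_tsum_eq_tsum_sum_antidiagonal_of_summable_norm hα hv,
    ← (summable_norm_pow_mul_integral hloop_sum).of_norm.tsum_add
      (summable_norm_sum_mul_antidiagonal_of_summable_norm hα hv).of_norm]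
  exact tsum_congr hrenewal

end RegeneratesInMean

end RegenerationTime

section ReturnTime

variable {S Ω : Type*} {X : ℕ → Ω → S} {s : S} {ω : Ω}

theorem retTime_le_coe {m : ℕ} (hm : 0 < m) (hs : X m ω = s) : retTime X s ω ≤ m :=
  iInf₂_le m ⟨hm, hs⟩

theorem one_le_retTime : 1 ≤ retTime X s ω :=
  le_iInf₂ fun m hm ↦ by exact_mod_cast hm.1

theorem exists_visit_of_retTime_le_coe {k : ℕ} (h : retTime X s ω ≤ k) :
    ∃ m, 0 < m ∧ m ≤ k ∧ X m ω = s := by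
  by_contra! hne
  have hlt : ((k + 1 : ℕ) : ℕ∞) ≤ retTime X s ω :=
    le_iInf₂ fun m hm ↦ Nat.cast_le.2 <| Nat.succ_le_of_lt <|
      lt_of_not_ge fun hmk ↦ hne m hm.1 hmk hm.2
  exact absurd (Nat.cast_le.1 (hlt.trans h)) (Nat.not_succ_le_self k)

theorem retTime_eq_coe_iff {k : ℕ} :
    retTime X s ω = k ↔ 0 < k ∧ X k ω = s ∧ ∀ j, 0 < j → j < k → X j ω ≠ s := by
  constructor
  · intro h
    have hmin (j : ℕ) (hj : 0 < j) (hjk : j < k) : X j ω ≠ s := fun hs ↦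
      hjk.not_ge (Nat.cast_le.1 (h.symm.le.trans (retTime_le_coe hj hs)))
    obtain ⟨m, hm, hmk, hms⟩ := exists_visit_of_retTime_le_coe h.le
    obtain rfl : m = k := hmk.eq_of_not_lt fun hlt ↦ hmin m hm hlt hms
    exact ⟨hm, hms, hmin⟩
  · rintro ⟨hk, hks, hmin⟩
    refine le_antisymm (retTime_le_coe hk hks) (le_iInf₂ fun m hm ↦ Nat.cast_le.2 ?_)
    exact not_lt.1 fun hlt ↦ hmin m hm.1 hlt hm.2

variable [DecidableEq S]

theorem waitTime_one (h0 : X 0 ω = s) : waitTime X s 1 ω = 0 :=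
  nonpos_iff_eq_zero.1 <| iInf₂_le_of_le 0 (by rw [Finset.sum_range_one, if_pos h0]) le_rfl

theorem two_le_sum_visits_iff (h0 : X 0 ω = s) (w : ℕ) :
    2 ≤ ∑ t ∈ Finset.range (w + 1), (if X t ω = s then 1 else 0)
      ↔ ∃ m, 0 < m ∧ m ≤ w ∧ X m ω = s := by
  rw [Finset.sum_range_succ', if_pos h0, Nat.succ_le_succ_iff, Nat.one_le_iff_ne_zero,
    Ne, Finset.sum_eq_zero_iff]
  push Not
  constructor
  · rintro ⟨t, ht, hts⟩
    exact ⟨t + 1, t.succ_pos, Finset.mem_range.1 ht, by simpa using hts⟩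
  · rintro ⟨m, hm, hmw, hms⟩
    obtain ⟨t, rfl⟩ := Nat.exists_eq_add_one.2 hm
    exact ⟨t, Finset.mem_range.2 hmw, by simp [hms]⟩

theorem waitTime_two (h0 : X 0 ω = s) : waitTime X s 2 ω = retTime X s ω := by
  refine le_antisymm (le_iInf₂ fun m hm ↦ iInf₂_le m ?_) (le_iInf₂ fun w hw ↦ ?_)
  · exact (two_le_sum_visits_iff h0 m).2 ⟨m, hm.1, le_rfl, hm.2⟩
  · obtain ⟨m, hm, hmw, hms⟩ := (two_le_sum_visits_iff h0 w).1 hw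
    exact (retTime_le_coe hm hms).trans (Nat.cast_le.2 hmw)

theorem interTime_one (h0 : X 0 ω = s) : interTime X s 1 ω = retTime X s ω := by
  rw [interTime, waitTime_one h0, waitTime_two h0, tsub_zero]

theorem loopReward_one (γ : ℝ) (R : ℕ → Ω → ℝ) (h0 : X 0 ω = s) :
    loopReward γ X R s 1 ω
      = ∑' t : ℕ, γ ^ t * {ω | t < retTime X s ω}.indicator (R t) ω := by
  simp only [loopReward, interTime_one h0, waitTime_one h0, ENat.toNat_zero, zero_add,
    Set.indicator_apply, Set.mem_ofPred_eq, mul_ite, mul_zero]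

end ReturnTime

section InitialPath

variable {S Ω : Type*} {X : ℕ → Ω → S}

/-- The path `(X_0, …, X_k)`. Its preimages are the events determined by the first `k` steps, so
it stands in for the natural filtration of `X` at time `k`. -/
def initialPath (X : ℕ → Ω → S) (k : ℕ) (ω : Ω) : Fin (k + 1) → S := fun i ↦ X i ω

theorem initialPath_succ (X : ℕ → Ω → S) (k : ℕ) (ω : Ω) :
    initialPath X (k + 1) ω = Fin.snoc (initialPath X k ω) (X (k + 1) ω) :=
  (Fin.snoc_init_self (initialPath X (k + 1) ω)).symm

theorem initialPath_succ_preimage_snoc (k : ℕ) (h : Fin (k + 1) → S) (y : S) :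
    initialPath X (k + 1) ⁻¹' {Fin.snoc h y} = initialPath X k ⁻¹' {h} ∩ X (k + 1) ⁻¹' {y} := by
  ext ω
  simp [initialPath_succ, Fin.snoc_inj]

theorem setOf_retTime_eq_coe (X : ℕ → Ω → S) (s : S) (k : ℕ) :
    {ω | retTime X s ω = k} = initialPath X k ⁻¹'
      {h | 0 < k ∧ h (Fin.last k) = s ∧ ∀ j : Fin (k + 1), 0 < j.val → j.val < k → h j ≠ s} := by
  ext ω
  simp only [Set.mem_ofPred_eq, retTime_eq_coe_iff, Set.mem_preimage, initialPath, Fin.val_last]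
  exact and_congr_right' <| and_congr_right' <|
    ⟨fun hmin j ↦ hmin j, fun hmin j hj hjk ↦ hmin ⟨j, hjk.trans k.lt_succ_self⟩ hj hjk⟩

variable [MeasurableSpace S] [MeasurableSpace Ω]

theorem measurable_initialPath (hX : ∀ t, Measurable (X t)) (k : ℕ) :
    Measurable (initialPath X k) :=
  measurable_pi_lambda _ fun i ↦ hX i

theorem measurable_retTime [Countable S] [MeasurableSingletonClass S]
    (hX : ∀ t, Measurable (X t)) (s : S) : Measurable (retTime X s) :=
  ENat.measurable_iff.2 fun k ↦ by
    change MeasurableSet {ω | retTime X s ω = k}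
    rw [setOf_retTime_eq_coe]
    exact measurable_initialPath hX k (Set.to_countable _).measurableSet

end InitialPath

section MarkovRewardProcess

theorem map_restrict_eq_sum_fibers {Ω T E : Type*} [MeasurableSpace Ω] [MeasurableSpace T]
    [MeasurableSpace E] [Countable T] [MeasurableSingletonClass T] (μ : Measure Ω)
    {Y : Ω → T} (hY : Measurable Y) {f : Ω → E} (hf : Measurable f) {A : Set Ω}
    (hA : MeasurableSet A) :
    (μ.restrict A).map f
      = Measure.sum fun y ↦ (μ.restrict (A ∩ Y ⁻¹' {y})).map f := by
  have hfib (y : T) : MeasurableSet (A ∩ Y ⁻¹' {y}) := hA.inter (hY (measurableSet_singleton y))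
  have hdisj : Pairwise (Function.onFun Disjoint fun y ↦ A ∩ Y ⁻¹' {y}) := fun y z hyz ↦
    ((Set.disjoint_singleton.2 hyz).preimage Y).mono Set.inter_subset_right Set.inter_subset_right
  have hunion : ⋃ y, A ∩ Y ⁻¹' {y} = A := by
    rw [← Set.inter_iUnion, Set.inter_eq_left.2]
    exact fun ω _ ↦ Set.mem_iUnion.2 ⟨Y ω, rfl⟩
  rw [← Measure.map_sum hf.aemeasurable, ← Measure.restrict_iUnion hdisj hfib, hunion]

variable {S Ω : Type*} [MeasurableSpace S] [MeasurableSpace Ω] {μ : Measure Ω}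
  {X : ℕ → Ω → S} {R : ℕ → Ω → ℝ} {P : S → S → ℝ≥0∞} {ν : S → Measure ℝ}

/-- `(X_t, R_t)` is a Markov reward process with transition probabilities `P` and reward laws `ν`:
given the states, the rewards are independent with `R_t ~ ν (X_t)`. The initial law is arbitrary,
and the joint law is prescribed on cylinder sets. -/
structure IsMarkovRewardProcess (μ : Measure Ω) (X : ℕ → Ω → S) (R : ℕ → Ω → ℝ)
    (P : S → S → ℝ≥0∞) (ν : S → Measure ℝ) : Prop where
  measurable_state : ∀ t, Measurable (X t)
  measurable_reward : ∀ t, Measurable (R t)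
  measure_cylinder : ∀ (t : ℕ) (h : Fin (t + 1) → S) (B : Fin (t + 1) → Set ℝ),
    (∀ i, MeasurableSet (B i)) →
    μ {ω | ∀ i : Fin (t + 1), X i.val ω = h i ∧ R i.val ω ∈ B i}
      = μ {ω | X 0 ω = h 0} * (∏ i : Fin t, P (h i.castSucc) (h i.succ))
        * ∏ i : Fin (t + 1), ν (h i) (B i)

/-- The law of the reward received after `u` steps from a given state; the Markov property says that
it is the law of `R (k + u)` given a path `(X_0, …, X_k)` ending in that state. -/
def rewardLaw (P : S → S → ℝ≥0∞) (ν : S → Measure ℝ) : ℕ → S → Measure ℝ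
  | 0, x => ν x
  | u + 1, x => Measure.sum fun y ↦ P x y • rewardLaw P ν u y

namespace IsMarkovRewardProcess

variable [∀ x, IsProbabilityMeasure (ν x)]

theorem measure_initialPath_inter_reward (hM : IsMarkovRewardProcess μ X R P ν) (k : ℕ)
    (h : Fin (k + 1) → S) {B : Set ℝ} (hB : MeasurableSet B) :
    μ (initialPath X k ⁻¹' {h} ∩ R k ⁻¹' B)
      = μ {ω | X 0 ω = h 0} * (∏ i : Fin k, P (h i.castSucc) (h i.succ))
        * ν (h (Fin.last k)) B := by
  have hcyl := hM.measure_cylinder k h (Fin.snoc (fun _ ↦ Set.univ) B) fun i ↦ by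
    induction i using Fin.lastCases <;> simp [hB]
  rw [Fin.prod_univ_castSucc (fun i ↦ ν (h i) _)] at hcyl
  simp only [Fin.snoc_castSucc, Fin.snoc_last, measure_univ, Finset.prod_const_one,
    one_mul] at hcyl
  rw [← hcyl]
  congr 1
  ext ω
  simp [initialPath, funext_iff, Fin.forall_fin_succ', and_assoc]

theorem measure_initialPath (hM : IsMarkovRewardProcess μ X R P ν) (k : ℕ)
    (h : Fin (k + 1) → S) :
    μ (initialPath X k ⁻¹' {h})
      = μ {ω | X 0 ω = h 0} * ∏ i : Fin k, P (h i.castSucc) (h i.succ) := by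
  simpa using hM.measure_initialPath_inter_reward k h MeasurableSet.univ

theorem measure_initialPath_snoc (hM : IsMarkovRewardProcess μ X R P ν) (k : ℕ)
    (h : Fin (k + 1) → S) (y : S) :
    μ (initialPath X (k + 1) ⁻¹' {Fin.snoc h y})
      = μ (initialPath X k ⁻¹' {h}) * P (h (Fin.last k)) y := by
  rw [hM.measure_initialPath, hM.measure_initialPath, Fin.prod_univ_castSucc, mul_assoc]
  simp only [Fin.snoc_apply_zero, Fin.snoc_castSucc, Fin.succ_last, Fin.snoc_last,
    ← Fin.castSucc_succ]

variable [Countable S] [MeasurableSingletonClass S]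

theorem map_reward_restrict_cylinder (hM : IsMarkovRewardProcess μ X R P ν) (u k : ℕ)
    (h : Fin (k + 1) → S) :
    (μ.restrict (initialPath X k ⁻¹' {h})).map (R (k + u))
      = μ (initialPath X k ⁻¹' {h}) • rewardLaw P ν u (h (Fin.last k)) := by
  induction u generalizing k with
  | zero =>
    ext B hB
    rw [Measure.map_apply (hM.measurable_reward _) hB,
      Measure.restrict_apply (hM.measurable_reward _ hB), Set.inter_comm, add_zero,
      hM.measure_initialPath_inter_reward k h hB, hM.measure_initialPath]
    rfl
  | succ u ih =>
    rw [map_restrict_eq_sum_fibers μ (hM.measurable_state (k + 1)) (hM.measurable_reward _)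
      (measurable_initialPath hM.measurable_state k (measurableSet_singleton h))]
    ext B hB
    simp only [← initialPath_succ_preimage_snoc, show k + (u + 1) = k + 1 + u by ring, ih,
      Fin.snoc_last, hM.measure_initialPath_snoc, rewardLaw, Measure.sum_apply _ hB,
      Measure.smul_apply, smul_eq_mul, mul_assoc, ENNReal.tsum_mul_left]

theorem map_reward_restrict_initialPath (hM : IsMarkovRewardProcess μ X R P ν) (u : ℕ) {k : ℕ}
    {s : S} {F : Set (Fin (k + 1) → S)} (hF : ∀ h ∈ F, h (Fin.last k) = s) :
    (μ.restrict (initialPath X k ⁻¹' F)).map (R (k + u))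
      = μ (initialPath X k ⁻¹' F) • rewardLaw P ν u s := by
  have hY := measurable_initialPath hM.measurable_state k
  have hfib (h : Fin (k + 1) → S) : MeasurableSet (initialPath X k ⁻¹' {h}) :=
    hY (measurableSet_singleton h)
  ext B hB
  have hRB := hM.measurable_reward (k + u) hB
  have hcyl (h : F) : μ.restrict (R (k + u) ⁻¹' B) (initialPath X k ⁻¹' {h.1})
      = μ (initialPath X k ⁻¹' {h.1}) * rewardLaw P ν u s B := by
    have := DFunLike.congr_fun (hM.map_reward_restrict_cylinder u k h) B
    rwa [Measure.map_apply (hM.measurable_reward _) hB, Measure.restrict_apply hRB,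
      Set.inter_comm, ← Measure.restrict_apply (hfib _), hF h h.2] at this
  rw [Measure.map_apply (hM.measurable_reward _) hB, Measure.restrict_apply hRB, Set.inter_comm,
    ← Measure.restrict_apply (hY F.to_countable.measurableSet), Measure.smul_apply, smul_eq_mul,
    ← tsum_measure_preimage_singleton F.to_countable fun h _ ↦ hfib h,
    ← tsum_measure_preimage_singleton F.to_countable fun h _ ↦ hfib h, ← ENNReal.tsum_mul_right]
  exact tsum_congr hcyl

theorem map_reward (hM : IsMarkovRewardProcess μ X R P ν) [IsProbabilityMeasure μ] {s : S}
    (hs : ∀ᵐ ω ∂μ, X 0 ω = s) (u : ℕ) : μ.map (R u) = rewardLaw P ν u s := by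
  have huniv : initialPath X 0 ⁻¹' {h | h (Fin.last 0) = s} =ᵐ[μ] Set.univ :=
    eventuallyEq_univ.2 hs
  have hmap := hM.map_reward_restrict_initialPath u (F := {h | h (Fin.last 0) = s}) fun _ h ↦ h
  rwa [Measure.restrict_congr_set huniv, measure_congr huniv, Measure.restrict_univ, measure_univ,
    one_smul, zero_add] at hmap

theorem ae_reward_mem (hM : IsMarkovRewardProcess μ X R P ν) {B : Set ℝ} (hB : MeasurableSet B)
    (hν : ∀ x, ν x Bᶜ = 0) (t : ℕ) : ∀ᵐ ω ∂μ, R t ω ∈ B := by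
  have hcyl (h : Fin (t + 1) → S) : (μ.restrict (initialPath X t ⁻¹' {h})).map (R t)
      = μ (initialPath X t ⁻¹' {h}) • ν (h (Fin.last t)) := hM.map_reward_restrict_cylinder 0 t h
  have hlaw : μ.map (R t)
      = Measure.sum fun h ↦ μ (initialPath X t ⁻¹' {h}) • ν (h (Fin.last t)) := by
    simpa only [Measure.restrict_univ, Set.univ_inter, hcyl] using map_restrict_eq_sum_fibers μ
      (measurable_initialPath hM.measurable_state t) (hM.measurable_reward t) MeasurableSet.univ
  refine ae_of_ae_map (hM.measurable_reward t).aemeasurable ?_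
  rw [hlaw]
  exact (Measure.ae_sum_iff' (p := (· ∈ B)) hB).2 fun h ↦ Measure.ae_smul_measure (hν _) _

theorem regeneratesInMean_retTime (hM : IsMarkovRewardProcess μ X R P ν) [IsProbabilityMeasure μ]
    {s : S} (hs : ∀ᵐ ω ∂μ, X 0 ω = s) : RegeneratesInMean μ R (retTime X s) := by
  intro k u
  have hmean : ∫ x, x ∂μ.map (R u) = ∫ ω, R u ω ∂μ :=
    integral_map (hM.measurable_reward u).aemeasurable aestronglyMeasurable_id
  have hmap : (μ.restrict {ω | retTime X s ω = k}).map (R (k + u))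
      = μ {ω | retTime X s ω = k} • μ.map (R u) := by
    rw [hM.map_reward hs, setOf_retTime_eq_coe]
    exact hM.map_reward_restrict_initialPath u fun h hh ↦ hh.2.1
  calc ∫ ω in {ω | retTime X s ω = k}, R (k + u) ω ∂μ
      = ∫ x, x ∂(μ.restrict {ω | retTime X s ω = k}).map (R (k + u)) :=
        (integral_map (hM.measurable_reward _).aemeasurable aestronglyMeasurable_id).symm
    _ = μ.real {ω | retTime X s ω = k} * ∫ x, x ∂μ.map (R u) := by
        rw [hmap, integral_smul_measure, smul_eq_mul, measureReal_def]
    _ = μ.real {ω | retTime X s ω = k} * ∫ ω, R u ω ∂μ := by rw [hmean]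

end IsMarkovRewardProcess

end MarkovRewardProcess

theorem stmt0_general {S : Type*} [Countable S] [DecidableEq S] [MeasurableSpace S]
    [MeasurableSingletonClass S] {Ω : Type*} [MeasurableSpace Ω] {μ : Measure Ω}
    [IsProbabilityMeasure μ] {X : ℕ → Ω → S} {R : ℕ → Ω → ℝ} {P : S → S → ℝ≥0∞}
    {ν : S → Measure ℝ} [∀ x, IsProbabilityMeasure (ν x)]
    (hM : IsMarkovRewardProcess μ X R P ν) {γ : ℝ} (hγ : |γ| < 1)
    (hR : ∀ t, Integrable (R t) μ) (hsum : Summable fun t ↦ |γ| ^ t * ∫ ω, |R t ω| ∂μ)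
    {s : S} (hs : ∀ᵐ ω ∂μ, X 0 ω = s) :
    (∫ ω, ∑' t : ℕ, γ ^ t * R t ω ∂μ)
      = (∫ ω, loopReward γ X R s 1 ω ∂μ)
        + (∫ ω, discPow γ (interTime X s 1 ω) ∂μ) * ∫ ω, ∑' t : ℕ, γ ^ t * R t ω ∂μ
    ∧ (∫ ω, ∑' t : ℕ, γ ^ t * R t ω ∂μ)
      = (∫ ω, loopReward γ X R s 1 ω ∂μ)
        / (1 - ∫ ω, discPow γ (interTime X s 1 ω) ∂μ) := by
  have hβ := integral_congr_ae (hs.mono fun ω h0 ↦ loopReward_one γ R h0)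
  have hα := integral_congr_ae (hs.mono fun ω h0 ↦ congrArg (discPow γ) (interTime_one h0))
  have hbellman := (hM.regeneratesInMean_retTime hs).integral_tsum_eq_add
    (measurable_retTime hM.measurable_state s) hγ hR hsum
  have hα_lt : ∫ ω, discPow γ (retTime X s ω) ∂μ < 1 :=
    (le_abs_self _).trans_lt ((abs_integral_discPow_le hγ.le fun _ ↦ one_le_retTime).trans_lt hγ)
  rw [hα, hβ]
  refine ⟨hbellman, ?_⟩
  rw [eq_div_iff (by linarith)]
  linarith

/-- the loop Bellman equation `v(s) = β(s) + α(s)·v(s)`, equivalently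
`v(s) = β(s)/(1-α(s))`, for a finite MRP started at a positive recurrent state `s`. -/
theorem stmt0 {S : Type*} [Fintype S] [DecidableEq S] [MeasurableSpace S]
    [MeasurableSingletonClass S]
    {Ω : Type*} [MeasurableSpace Ω] (μ : Measure Ω) [IsProbabilityMeasure μ]
    (X : ℕ → Ω → S) (R : ℕ → Ω → ℝ)
    (hX : ∀ t, Measurable (X t)) (hR : ∀ t, Measurable (R t))
    (P : S → S → ℝ≥0∞) (hrow : ∀ x, ∑ y, P x y = 1)
    (ν : S → Measure ℝ) (hν : ∀ x, IsProbabilityMeasure (ν x))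
    (rmax : ℝ) (hrmax : 0 ≤ rmax) (hsupp : ∀ x, ν x (Set.Icc 0 rmax)ᶜ = 0)
    -- the joint law of the MRP `(X_t, R_t)` on cylinder sets: Markov transitions for the
    -- states and conditionally independent rewards `R_t ~ ν (X_t)`
    (hlaw : ∀ (t : ℕ) (h : Fin (t + 1) → S) (B : Fin (t + 1) → Set ℝ),
      (∀ i, MeasurableSet (B i)) →
      μ {ω | ∀ i : Fin (t + 1), X i.val ω = h i ∧ R i.val ω ∈ B i}
        = μ {ω | X 0 ω = h 0} * (∏ i : Fin t, P (h i.castSucc) (h i.succ))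
          * ∏ i : Fin (t + 1), ν (h i) (B i))
    (γ : ℝ) (hγ0 : 0 ≤ γ) (hγ1 : γ < 1)
    (s : S)
    -- the chain starts at `s`
    (hstart : μ {ω | X 0 ω = s} = 1)
    -- `s` is positive recurrent: `ρ_s = E_s[H_s^+] < ∞`
    (hrec : ∫⁻ ω, (retTime X s ω : ℝ≥0∞) ∂μ ≠ ⊤) :
    (∫ ω, ∑' t : ℕ, γ ^ t * R t ω ∂μ)
      = (∫ ω, loopReward γ X R s 1 ω ∂μ)
        + (∫ ω, discPow γ (interTime X s 1 ω) ∂μ) * ∫ ω, ∑' t : ℕ, γ ^ t * R t ω ∂μ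
    ∧ (∫ ω, ∑' t : ℕ, γ ^ t * R t ω ∂μ)
      = (∫ ω, loopReward γ X R s 1 ω ∂μ)
        / (1 - ∫ ω, discPow γ (interTime X s 1 ω) ∂μ) := by
  have hM : IsMarkovRewardProcess μ X R P ν := ⟨hX, hR, hlaw⟩
  have hs : ∀ᵐ ω ∂μ, X 0 ω = s :=
    (prob_compl_eq_zero_iff (hX 0 (measurableSet_singleton s))).2 hstart
  have hγ : |γ| < 1 := by rwa [abs_of_nonneg hγ0]
  have hbdd (t : ℕ) : ∀ᵐ ω ∂μ, |R t ω| ≤ rmax :=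
    (hM.ae_reward_mem measurableSet_Icc hsupp t).mono fun ω h ↦ by rw [abs_of_nonneg h.1]; exact h.2
  exact stmt0_general hM hγ (fun t ↦ .of_bound (hR t).aestronglyMeasurable rmax (hbdd t))
    (summable_pow_mul_integral_abs_of_bound hγ hbdd) hs
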